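/- arXiv:2004.10708 — 2 statements merged into one kernel-verified Lean document; each statement's English description precedes it below -/
import Mathlib

section
/- Araki–Lieb–Thirring consequence: for a density matrix ρ, a positive definite matrix σ, and α ∈ (0,1), the geometric Rényi quasi-entropy is dominated by the sandwiched quasi-entropy: Tr[σ (σ^{−1/2} ρ σ^{−1/2})^α] ≤ Tr[(σ^{(1−α)/(2α)} ρ σ^{(1−α)/(2α)})^α]. For α ∈ (1,∞) the inequality is reversed. Consequently D̃_α(ρ‖σ) ≤ D̂_α(ρ‖σ) for all α ∈ (0,1) ∪ (1,∞). -/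
/-!
Let `A = σ^{-1/2} ρ σ^{-1/2}`. Then `Q̃_α` is the trace of `(σ^{1/(2α)} A σ^{1/(2α)})^α`, and `Q̂_α`
is the trace of `σ^{1/2} A^α σ^{1/2}`. Both inequalities are therefore instances of the
Araki–Lieb–Thirring inequality
`Tr (D^θ A^θ D^θ)^q ≤ Tr (D A D)^{θ q}` for `0 < θ < 1`, `q > 0`, `A ≥ 0`, `D > 0`:
take `θ = α`, `q = 1`, `D = σ^{1/(2α)}` when `α < 1`; take `θ = 1/α`, `q = α`, `D = σ^{1/2}` and
`A^α` in place of `A` when `α > 1`. The inequality of the divergences follows by monotonicity of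
the logarithm, both traces being positive because `ρ ≠ 0`.

The Araki–Lieb–Thirring inequality (`sum_rpow_le`) is proved by weak log-majorization: the product
of the `k` largest eigenvalues of `D^θ A^θ D^θ` is at most the `θ`-th power of the corresponding
product for `D A D`. The usual passage to antisymmetric tensor powers is replaced by determinants.
If the columns of `W` are the top `k` eigenvectors of `D^θ A^θ D^θ`, the product in question is the
value at `z = θ` of the function `z ↦ det (Wᴴ Dᶻ Aᶻ Dᶻ W)`, which is entire and bounded on the strip
`0 ≤ re z ≤ 1`. By the Cauchy–Binet formula it is at most `1` on `re z = 0`, and at most the product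
of the `k` largest eigenvalues of `D A D` on `re z = 1`; Hadamard's three lines theorem
(`det_three_lines`) gives the claim. Summation by parts (`sum_le_of_prod_le`) turns
log-majorization into the inequality between sums of powers.
-/

open Matrix
open scoped ComplexOrder

/-- Functional calculus for Hermitian matrices: apply `f` to the eigenvalues. -/
noncomputable def matFun {d : Type*} [Fintype d] [DecidableEq d]
    (A : Matrix d d ℂ) (f : ℝ → ℝ) : Matrix d d ℂ :=
  if hA : A.IsHermitian then
    (hA.eigenvectorUnitary : Matrix d d ℂ) *
      Matrix.diagonal (fun i => (f (hA.eigenvalues i) : ℂ)) *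
      (star hA.eigenvectorUnitary : Matrix d d ℂ)
  else 0

/-- Real matrix power of a Hermitian matrix via the functional calculus. -/
noncomputable def mrpow {d : Type*} [Fintype d] [DecidableEq d]
    (A : Matrix d d ℂ) (r : ℝ) : Matrix d d ℂ :=
  matFun A (fun x => x ^ r)

/-- The geometric Rényi relative quasi-entropy `Q̂_α(ρ‖σ) = Tr[σ (σ^{-1/2} ρ σ^{-1/2})^α]`. -/
noncomputable def geomQuasiEntropy {d : Type*} [Fintype d] [DecidableEq d]
    (α : ℝ) (ρ σ : Matrix d d ℂ) : ℂ :=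
  (σ * mrpow (mrpow σ (-(1 / 2)) * ρ * mrpow σ (-(1 / 2))) α).trace

/-- The sandwiched Rényi relative quasi-entropy
`Q̃_α(ρ‖σ) = Tr[(σ^{(1-α)/(2α)} ρ σ^{(1-α)/(2α)})^α]`. -/
noncomputable def sandQuasiEntropy {d : Type*} [Fintype d] [DecidableEq d]
    (α : ℝ) (ρ σ : Matrix d d ℂ) : ℂ :=
  (mrpow (mrpow σ ((1 - α) / (2 * α)) * ρ * mrpow σ ((1 - α) / (2 * α))) α).trace

/-! ### Determinants of compressions -/

theorem det_mul_eq_sum_submatrix {k n : ℕ} (A : Matrix (Fin k) (Fin n) ℂ)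
    (B : Matrix (Fin n) (Fin k) ℂ) :
    (A * B).det = ∑ f : Fin k → Fin n, (A.submatrix id f).det * ∏ i, B (f i) i := by
  simp only [det_apply', Matrix.mul_apply, submatrix_apply, id]
  simp_rw [Finset.prod_univ_sum, Finset.mul_sum, Finset.sum_mul, Fintype.piFinset_univ]
  rw [Finset.sum_comm]
  simp_rw [Finset.prod_mul_distrib, mul_assoc]

/-- Cauchy–Binet, summing over all maps `f : Fin k → Fin n` instead of `k`-subsets; the
factor `k!` counts the orderings of each subset. -/
theorem cauchyBinet {k n : ℕ} (A : Matrix (Fin k) (Fin n) ℂ)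
    (B : Matrix (Fin n) (Fin k) ℂ) :
    (k.factorial : ℂ) * (A * B).det =
      ∑ f : Fin k → Fin n, (A.submatrix id f).det * (B.submatrix f id).det := by
  have key : ∀ s : Equiv.Perm (Fin k), ∑ f : Fin k → Fin n, (A.submatrix id f).det *
      (((Equiv.Perm.sign s : ℤ) : ℂ) * ∏ i, B (f (s i)) i) = (A * B).det := by
    intro s
    rw [det_mul_eq_sum_submatrix]
    refine Fintype.sum_equiv (Equiv.arrowCongr s.symm (Equiv.refl _)) _ _ fun f => ?_
    have h1 : (Equiv.arrowCongr s.symm (Equiv.refl (Fin n))) f = f ∘ s := by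
      ext i; simp [Equiv.arrowCongr]
    have h2 : A.submatrix id (f ∘ s) = (A.submatrix id f).submatrix id s := rfl
    rw [h1, h2, det_permute']
    simp only [Function.comp_apply]
    ring
  simp only [det_apply' (B.submatrix _ _), submatrix_apply, id, Finset.mul_sum]
  rw [Finset.sum_comm, Finset.sum_congr rfl fun s _ => key s]
  simp [Fintype.card_perm]

theorem det_conjTranspose_mul {k n : ℕ} (E F : Matrix (Fin n) (Fin k) ℂ) :
    (k.factorial : ℂ) * (Eᴴ * F).det =
      ∑ f : Fin k → Fin n, star (E.submatrix f id).det * (F.submatrix f id).det := by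
  rw [cauchyBinet]
  refine Finset.sum_congr rfl fun f _ => ?_
  rw [← det_conjTranspose, conjTranspose_submatrix]

/-- The Cauchy–Schwarz inequality for determinants, in its arithmetic-mean form. -/
theorem norm_det_conjTranspose_mul_le {k n : ℕ} (E F : Matrix (Fin n) (Fin k) ℂ) {b : ℝ}
    (hE : (Eᴴ * E).det.re ≤ b) (hF : (Fᴴ * F).det.re ≤ b) : ‖(Eᴴ * F).det‖ ≤ b := by
  have hk : (0 : ℝ) < k.factorial := by exact_mod_cast k.factorial_pos
  have self : ∀ E : Matrix (Fin n) (Fin k) ℂ, (k.factorial : ℝ) * (Eᴴ * E).det.re =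
      ∑ f : Fin k → Fin n, ‖(E.submatrix f id).det‖ ^ 2 := by
    intro E
    have := congrArg Complex.re (det_conjTranspose_mul E E)
    rw [← Complex.ofReal_natCast, Complex.re_ofReal_mul, Complex.re_sum] at this
    rw [this]
    refine Finset.sum_congr rfl fun f _ => ?_
    rw [Complex.star_def, Complex.conj_mul']
    norm_cast
  have h1 : (k.factorial : ℝ) * ‖(Eᴴ * F).det‖ ≤
      ∑ f : Fin k → Fin n, ‖(E.submatrix f id).det‖ * ‖(F.submatrix f id).det‖ := by
    have := congrArg norm (det_conjTranspose_mul E F)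
    rw [norm_mul, Complex.norm_natCast] at this
    rw [this]
    refine (norm_sum_le _ _).trans (le_of_eq ?_)
    simp
  have h2 : ∑ f : Fin k → Fin n, ‖(E.submatrix f id).det‖ * ‖(F.submatrix f id).det‖ ≤
      ∑ f : Fin k → Fin n, (‖(E.submatrix f id).det‖ ^ 2 + ‖(F.submatrix f id).det‖ ^ 2) / 2 :=
    Finset.sum_le_sum fun f _ => by
      nlinarith [sq_nonneg (‖(E.submatrix f id).det‖ - ‖(F.submatrix f id).det‖)]
  rw [← Finset.sum_div, Finset.sum_add_distrib, ← self, ← self] at h2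
  nlinarith

/-- A `k`-dimensional compression of a diagonal matrix has determinant at most the largest
product of `k` distinct diagonal entries. -/
theorem det_compress_le {k n : ℕ} (W : Matrix (Fin n) (Fin k) ℂ) (hW : Wᴴ * W = 1)
    (x : Fin n → ℝ) {b : ℝ}
    (hb : ∀ f : Fin k → Fin n, Function.Injective f → ∏ j, x (f j) ≤ b) :
    (Wᴴ * diagonal (fun i => (x i : ℂ)) * W).det.re ≤ b := by
  have hk : (0 : ℝ) < k.factorial := by exact_mod_cast k.factorial_pos
  have h1 : (k.factorial : ℝ) * (Wᴴ * diagonal (fun i => (x i : ℂ)) * W).det.re =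
      ∑ f : Fin k → Fin n, (∏ j, x (f j)) * ‖(W.submatrix f id).det‖ ^ 2 := by
    have := congrArg Complex.re (cauchyBinet (Wᴴ * diagonal (fun i => (x i : ℂ))) W)
    rw [← Complex.ofReal_natCast, Complex.re_ofReal_mul, Complex.re_sum] at this
    rw [this]
    refine Finset.sum_congr rfl fun f _ => ?_
    have e : (Wᴴ * diagonal (fun i => (x i : ℂ))).submatrix id f =
        (W.submatrix f id)ᴴ * diagonal (fun j => (x (f j) : ℂ)) := by
      ext i j; simp [mul_diagonal]
    rw [e, det_mul, det_conjTranspose, det_diagonal, mul_right_comm, Complex.star_def,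
      Complex.conj_mul', mul_comm]
    norm_cast
  have h2 : (k.factorial : ℝ) = ∑ f : Fin k → Fin n, ‖(W.submatrix f id).det‖ ^ 2 := by
    have := congrArg Complex.re (det_conjTranspose_mul W W)
    rw [hW, det_one, mul_one, Complex.natCast_re, Complex.re_sum] at this
    rw [this]
    refine Finset.sum_congr rfl fun f _ => ?_
    rw [Complex.star_def, Complex.conj_mul']
    norm_cast
  have h3 : ∑ f : Fin k → Fin n, (∏ j, x (f j)) * ‖(W.submatrix f id).det‖ ^ 2 ≤
      ∑ f : Fin k → Fin n, b * ‖(W.submatrix f id).det‖ ^ 2 := by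
    refine Finset.sum_le_sum fun f _ => ?_
    by_cases hf : Function.Injective f
    · exact mul_le_mul_of_nonneg_right (hb f hf) (sq_nonneg _)
    · obtain ⟨i, j, hij, hne⟩ := by simpa [Function.Injective] using hf
      have : (W.submatrix f id).det = 0 :=
        det_zero_of_row_eq hne (by ext l; simp [hij])
      simp [this]
  rw [← Finset.mul_sum, ← h2, ← h1] at h3
  nlinarith

/-! ### Products of largest entries and weak log-majorization -/

theorem prod_injective_le {k n : ℕ} (hkn : k ≤ n) (x : Fin n → ℝ) (hx : ∀ i, 0 ≤ x i)
    (hanti : Antitone x) (f : Fin k → Fin n) (hf : Function.Injective f) :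
    ∏ j, x (f j) ≤ ∏ j : Fin k, x (Fin.castLE hkn j) := by
  have hc : (Finset.univ.image f).card = k := by
    rw [Finset.card_image_of_injective _ hf]; simp
  let e := (Finset.univ.image f).orderEmbOfFin hc
  have h1 : ∏ j, x (f j) = ∏ j, x (e j) := by
    rw [← Finset.prod_image (s := Finset.univ) (g := f) (f := x) (hf.injOn),
      ← Finset.prod_image (s := Finset.univ) (g := e) (f := x) (e.injective.injOn)]
    congr 1
    exact (Finset.image_orderEmbOfFin_univ _ hc).symm
  rw [h1]
  refine Finset.prod_le_prod (fun j _ => hx _) fun j _ => hanti ?_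
  have : ∀ m (hm : m < k), m ≤ (e ⟨m, hm⟩ : ℕ) := by
    intro m
    induction m with
    | zero => intro _; exact Nat.zero_le _
    | succ m ih =>
      intro hm
      have h2 := ih (by omega)
      have h3 : e ⟨m, by omega⟩ < e ⟨m + 1, hm⟩ := e.strictMono (by simp [Fin.lt_def])
      exact h2.trans_lt h3
  exact this j j.2

/-- Summation by parts: for decreasing weights `w` and nonnegative partial sums of `d`, the
weighted sum is at least the last weight times the total. -/
theorem sum_mul_ge_of_antitone {w d : ℕ → ℝ} {n : ℕ}
    (hw : ∀ i < n, w (i + 1) ≤ w i) (hd : ∀ k ≤ n + 1, 0 ≤ ∑ i ∈ Finset.range k, d i) :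
    w n * ∑ i ∈ Finset.range (n + 1), d i ≤ ∑ i ∈ Finset.range (n + 1), w i * d i := by
  induction n with
  | zero => simp
  | succ n ih =>
    have h1 := ih (fun i hi => hw i (by omega)) (fun k hk => hd k (by omega))
    have h2 := mul_le_mul_of_nonneg_right (hw n (by omega)) (hd (n + 1) (by omega))
    rw [Finset.sum_range_succ, Finset.sum_range_succ _ (n + 1)]
    linarith

/-- Weak log-majorization implies weak majorization: since `x - y ≥ y log (x / y)`, summation
by parts against the decreasing weights `y` reduces the claim to the partial products. -/
theorem sum_le_of_prod_le {x y : ℕ → ℝ} (n : ℕ) (hx : ∀ i, 0 ≤ x i) (hy : ∀ i, 0 ≤ y i)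
    (hanti : ∀ i, i + 1 < n → y (i + 1) ≤ y i)
    (h : ∀ k ≤ n, ∏ i ∈ Finset.range k, y i ≤ ∏ i ∈ Finset.range k, x i) :
    ∑ i ∈ Finset.range n, y i ≤ ∑ i ∈ Finset.range n, x i := by
  induction n with
  | zero => simp
  | succ n ih =>
    by_cases h0 : y n = 0
    · rw [Finset.sum_range_succ, Finset.sum_range_succ, h0]
      have := ih (fun i hi => hanti i (by omega)) (fun k hk => h k (by omega))
      linarith [hx n]
    have hyn : 0 < y n := lt_of_le_of_ne (hy n) (Ne.symm h0)
    have hypos : ∀ i ≤ n, 0 < y i := by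
      intro i hi
      induction hi using Nat.decreasingInduction with
      | self => exact hyn
      | of_succ j hj ihj => exact ihj.trans_le (hanti j (by omega))
    have hxpos : ∀ i ≤ n, 0 < x i := by
      intro i hi
      have h1 : 0 < ∏ i ∈ Finset.range (n + 1), x i :=
        (Finset.prod_pos fun j hj => hypos j (by simp at hj; omega)).trans_le (h (n + 1) le_rfl)
      refine lt_of_le_of_ne (hx i) fun h2 => h1.ne' ?_
      exact Finset.prod_eq_zero (Finset.mem_range.2 (by omega : i < n + 1)) h2.symm
    have hd : ∀ k ≤ n + 1, 0 ≤ ∑ i ∈ Finset.range k, (Real.log (x i) - Real.log (y i)) := by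
      intro k hk
      rw [Finset.sum_sub_distrib,
        ← Real.log_prod (fun i hi => (hxpos i (by simp at hi; omega)).ne'),
        ← Real.log_prod (fun i hi => (hypos i (by simp at hi; omega)).ne'), sub_nonneg]
      exact Real.log_le_log
        (Finset.prod_pos fun j hj => hypos j (by simp at hj; omega)) (h k hk)
    have h1 := sum_mul_ge_of_antitone (w := y) (n := n) (fun i hi => hanti i (by omega)) hd
    have h2 : ∑ i ∈ Finset.range (n + 1), y i * (Real.log (x i) - Real.log (y i)) ≤
        ∑ i ∈ Finset.range (n + 1), (x i - y i) := by
      refine Finset.sum_le_sum fun i hi => ?_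
      have hi' : i ≤ n := by simp at hi; omega
      have hyi := hypos i hi'
      have h3 := Real.log_le_sub_one_of_pos (div_pos (hxpos i hi') hyi)
      rw [Real.log_div (hxpos i hi').ne' hyi.ne'] at h3
      have h4 := mul_le_mul_of_nonneg_left h3 hyi.le
      rwa [mul_sub (y i) (x i / y i), mul_div_cancel₀ _ hyi.ne', mul_one] at h4
    rw [Finset.sum_sub_distrib] at h2
    have h5 := mul_nonneg hyn.le (hd (n + 1) le_rfl)
    linarith

/-! ### Analytic families of matrices and the three lines theorem -/

/-- For unitary `U`, the normal matrix whose eigenvectors are the columns of `U`, with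
eigenvalues `a`. -/
noncomputable def cdiag {n : ℕ} (U : Matrix (Fin n) (Fin n) ℂ) (a : Fin n → ℂ) :
    Matrix (Fin n) (Fin n) ℂ :=
  U * diagonal a * Uᴴ

theorem cdiag_mul {n : ℕ} {U : Matrix (Fin n) (Fin n) ℂ} (hU : Uᴴ * U = 1)
    (a b : Fin n → ℂ) : cdiag U a * cdiag U b = cdiag U (fun i => a i * b i) := by
  unfold cdiag
  rw [← diagonal_mul_diagonal]
  simp only [Matrix.mul_assoc]
  rw [← Matrix.mul_assoc Uᴴ U, hU, Matrix.one_mul]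

theorem cdiag_conjTranspose {n : ℕ} (U : Matrix (Fin n) (Fin n) ℂ) (a : Fin n → ℂ) :
    (cdiag U a)ᴴ = cdiag U (fun i => star (a i)) := by
  unfold cdiag
  simp only [conjTranspose_mul, conjTranspose_conjTranspose, diagonal_conjTranspose,
    Matrix.mul_assoc]
  rfl

theorem cdiag_one {n : ℕ} {U : Matrix (Fin n) (Fin n) ℂ} (hU : Uᴴ * U = 1) :
    cdiag U (fun _ => 1) = 1 := by
  unfold cdiag
  rw [diagonal_one, Matrix.mul_one, mul_eq_one_comm.1 hU]

theorem cdiag_unitary {n : ℕ} {U : Matrix (Fin n) (Fin n) ℂ} (hU : Uᴴ * U = 1)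
    (a : Fin n → ℂ) (ha : ∀ i, ‖a i‖ = 1) : (cdiag U a)ᴴ * cdiag U a = 1 := by
  rw [cdiag_conjTranspose, cdiag_mul hU, ← cdiag_one hU]
  congr 1
  ext i
  rw [Complex.star_def, Complex.conj_mul', ha]
  simp

theorem isometry_mul {k n : ℕ} {T : Matrix (Fin n) (Fin n) ℂ} (hT : Tᴴ * T = 1)
    {W : Matrix (Fin n) (Fin k) ℂ} (hW : Wᴴ * W = 1) : (T * W)ᴴ * (T * W) = 1 := by
  rw [conjTranspose_mul, Matrix.mul_assoc, ← Matrix.mul_assoc Tᴴ, hT, Matrix.one_mul, hW]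

/-- The coordinate-free form of `det_compress_le`. -/
theorem det_compress_cdiag_le {k n : ℕ} {U : Matrix (Fin n) (Fin n) ℂ} (hU : Uᴴ * U = 1)
    {W : Matrix (Fin n) (Fin k) ℂ} (hW : Wᴴ * W = 1) (x : Fin n → ℝ) {b : ℝ}
    (hb : ∀ f : Fin k → Fin n, Function.Injective f → ∏ j, x (f j) ≤ b) :
    (Wᴴ * cdiag U (fun i => (x i : ℂ)) * W).det.re ≤ b := by
  have hU' : (Uᴴ)ᴴ * Uᴴ = 1 := by
    rw [conjTranspose_conjTranspose]; exact mul_eq_one_comm.1 hU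
  have h := det_compress_le (Uᴴ * W) (isometry_mul hU' hW) x hb
  have e : (Uᴴ * W)ᴴ * diagonal (fun i => (x i : ℂ)) * (Uᴴ * W) =
      Wᴴ * cdiag U (fun i => (x i : ℂ)) * W := by
    simp only [cdiag, conjTranspose_mul, conjTranspose_conjTranspose, Matrix.mul_assoc]
  rwa [e] at h

/-- The complex power `c ^ z` of a nonnegative base, with `0 ^ z = 0` for every `z`: unlike
`Complex.cpow`, this is entire in `z` even for `c = 0`. -/
noncomputable def entirePow (c : ℝ) (z : ℂ) : ℂ :=
  if c = 0 then 0 else Complex.exp (z * (Real.log c : ℂ))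

theorem entirePow_ofReal {c t : ℝ} (hc : 0 ≤ c) (ht : 0 < t) :
    entirePow c (t : ℂ) = ((c ^ t : ℝ) : ℂ) := by
  unfold entirePow
  split_ifs with h
  · simp [h, Real.zero_rpow ht.ne']
  · rw [Real.rpow_def_of_pos (lt_of_le_of_ne hc (Ne.symm h)), mul_comm (Real.log c)]
    push_cast
    rfl

/-- Entire functions that are bounded on the strip `0 ≤ re z ≤ 1`. -/
def EntireBdd (g : ℂ → ℂ) : Prop :=
  Differentiable ℂ g ∧ ∃ K : ℝ, ∀ z : ℂ, 0 ≤ z.re → z.re ≤ 1 → ‖g z‖ ≤ K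

theorem EntireBdd.const (c : ℂ) : EntireBdd (fun _ => c) :=
  ⟨differentiable_const c, ‖c‖, fun _ _ _ => le_rfl⟩

theorem EntireBdd.mul {f g : ℂ → ℂ} (hf : EntireBdd f) (hg : EntireBdd g) :
    EntireBdd (fun z => f z * g z) := by
  obtain ⟨hf1, K, hK⟩ := hf
  obtain ⟨hg1, L, hL⟩ := hg
  refine ⟨hf1.mul hg1, K * L, fun z h0 h1 => ?_⟩
  rw [norm_mul]
  exact mul_le_mul (hK z h0 h1) (hL z h0 h1) (norm_nonneg _)
    ((norm_nonneg _).trans (hK z h0 h1))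

theorem EntireBdd.sum {ι : Type*} (s : Finset ι) {f : ι → ℂ → ℂ}
    (hf : ∀ i, EntireBdd (f i)) : EntireBdd (fun z => ∑ i ∈ s, f i z) := by
  choose h K hK using hf
  exact ⟨Differentiable.fun_sum fun i _ => h i, ∑ i ∈ s, K i, fun z h0 h1 =>
    (norm_sum_le _ _).trans (Finset.sum_le_sum fun i _ => hK i z h0 h1)⟩

theorem EntireBdd.prod {ι : Type*} (s : Finset ι) {f : ι → ℂ → ℂ}
    (hf : ∀ i, EntireBdd (f i)) : EntireBdd (fun z => ∏ i ∈ s, f i z) := by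
  classical
  induction s using Finset.induction_on with
  | empty => simpa using EntireBdd.const 1
  | insert a s ha ih => simpa [Finset.prod_insert ha] using (hf a).mul ih

theorem EntireBdd.entirePow (c : ℝ) : EntireBdd (entirePow c) := by
  unfold _root_.entirePow
  split_ifs with h
  · exact EntireBdd.const 0
  refine ⟨by fun_prop, Real.exp |Real.log c|, fun z h0 h1 => ?_⟩
  rw [Complex.norm_exp, Complex.re_mul_ofReal, Real.exp_le_exp]
  calc z.re * Real.log c ≤ z.re * |Real.log c| :=
        mul_le_mul_of_nonneg_left (le_abs_self _) h0
    _ ≤ 1 * |Real.log c| := mul_le_mul_of_nonneg_right h1 (abs_nonneg _)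
    _ = _ := one_mul _

theorem EntireBdd.matrix_mul {l m n : ℕ} {F : ℂ → Matrix (Fin l) (Fin m) ℂ}
    {G : ℂ → Matrix (Fin m) (Fin n) ℂ} (hF : ∀ i j, EntireBdd (fun z => F z i j))
    (hG : ∀ i j, EntireBdd (fun z => G z i j)) (i : Fin l) (j : Fin n) :
    EntireBdd (fun z => (F z * G z) i j) := by
  simp only [Matrix.mul_apply]
  exact EntireBdd.sum _ fun p => (hF i p).mul (hG p j)

theorem EntireBdd.det {k : ℕ} {F : ℂ → Matrix (Fin k) (Fin k) ℂ}
    (hF : ∀ i j, EntireBdd (fun z => F z i j)) : EntireBdd (fun z => (F z).det) := by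
  simp only [det_apply']
  exact EntireBdd.sum _ fun s => (EntireBdd.const _).mul (EntireBdd.prod _ fun i => hF _ _)

theorem entireBdd_cdiag {n : ℕ} (U : Matrix (Fin n) (Fin n) ℂ) (a : Fin n → ℝ)
    (i j : Fin n) : EntireBdd (fun z => cdiag U (fun l => entirePow (a l) z) i j) := by
  have h1 : ∀ p q, EntireBdd
      (fun z => (diagonal fun l => entirePow (a l) z : Matrix (Fin n) (Fin n) ℂ) p q) := by
    intro p q
    by_cases h : p = q
    · subst h; simpa using EntireBdd.entirePow (a p)
    · simpa [diagonal_apply_ne _ h] using EntireBdd.const 0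
  exact EntireBdd.matrix_mul (F := fun z => U * diagonal fun l => entirePow (a l) z)
    (G := fun _ => Uᴴ) (EntireBdd.matrix_mul (F := fun _ => U)
    (G := fun z => diagonal fun l => entirePow (a l) z) (fun _ _ => EntireBdd.const _) h1)
    (fun _ _ => EntireBdd.const _) i j

/-- Three lines theorem for `z ↦ det (Wᴴ Dᶻ Aᶻ Dᶻ W)`. On `re z = 0` the outer factors are unitary
and the middle one is a contraction, so the determinant is at most `1`; on `re z = 1` it is
`det (Eᴴ F)` with `Eᴴ E` and `Fᴴ F` both compressions of `D A D`. -/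
theorem det_three_lines {k n : ℕ} {U V P : Matrix (Fin n) (Fin n) ℂ} (hU : Uᴴ * U = 1)
    (hV : Vᴴ * V = 1) (hP : Pᴴ * P = 1) {a d x : Fin n → ℝ} (ha : ∀ i, 0 ≤ a i)
    (hd : ∀ i, 0 < d i) {θ : ℝ} (hθ0 : 0 < θ) (hθ1 : θ < 1)
    {W : Matrix (Fin n) (Fin k) ℂ} (hW : Wᴴ * W = 1)
    (hX : cdiag V (fun i => (d i : ℂ)) * cdiag U (fun i => (a i : ℂ)) *
      cdiag V (fun i => (d i : ℂ)) = cdiag P (fun i => (x i : ℂ))) {b : ℝ}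
    (hb : ∀ f : Fin k → Fin n, Function.Injective f → ∏ j, x (f j) ≤ b) :
    ‖(Wᴴ * (cdiag V (fun i => ((d i ^ θ : ℝ) : ℂ)) * cdiag U (fun i => ((a i ^ θ : ℝ) : ℂ)) *
      cdiag V (fun i => ((d i ^ θ : ℝ) : ℂ))) * W).det‖ ≤ b ^ θ := by
  let D : ℂ → Matrix (Fin n) (Fin n) ℂ := fun z => cdiag V (fun l => entirePow (d l) z)
  let A : ℂ → Matrix (Fin n) (Fin n) ℂ := fun z => cdiag U (fun l => entirePow (a l) z)
  let f : ℂ → ℂ := fun z => (Wᴴ * (D z * A z * D z) * W).det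
  have hf : EntireBdd f := EntireBdd.det (EntireBdd.matrix_mul (EntireBdd.matrix_mul
    (fun _ _ => EntireBdd.const _) (EntireBdd.matrix_mul (EntireBdd.matrix_mul
    (entireBdd_cdiag V d) (entireBdd_cdiag U a)) (entireBdd_cdiag V d)))
    (fun _ _ => EntireBdd.const _))
  have hT : ∀ z : ℂ, z.re = 0 → (D z)ᴴ * D z = 1 := fun z hz =>
    cdiag_unitary hV _ fun i => by
      rw [entirePow, if_neg (hd i).ne', Complex.norm_exp, Complex.re_mul_ofReal, hz]
      simp
  have hT' : ∀ z : ℂ, z.re = 0 → ((D z)ᴴ)ᴴ * (D z)ᴴ = 1 := fun z hz => by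
    rw [conjTranspose_conjTranspose]; exact mul_eq_one_comm.1 (hT z hz)
  have h0 : ∀ z : ℂ, z.re = 0 → ‖f z‖ ≤ 1 := by
    intro z hz
    have e : Wᴴ * (D z * A z * D z) * W = ((D z)ᴴ * W)ᴴ * (A z * (D z * W)) := by
      simp only [conjTranspose_mul, conjTranspose_conjTranspose, Matrix.mul_assoc]
    simp only [f, e]
    apply norm_det_conjTranspose_mul_le
    · rw [isometry_mul (hT' z hz) hW]; simp
    · have e2 : (A z * (D z * W))ᴴ * (A z * (D z * W)) =
          (D z * W)ᴴ * cdiag U (fun i => ((‖entirePow (a i) z‖ ^ 2 : ℝ) : ℂ)) * (D z * W) := by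
        have : (A z)ᴴ * A z = cdiag U (fun i => ((‖entirePow (a i) z‖ ^ 2 : ℝ) : ℂ)) := by
          simp only [A]
          rw [cdiag_conjTranspose, cdiag_mul hU]
          congr 1
          ext i
          rw [Complex.star_def, Complex.conj_mul']
          push_cast; rfl
        rw [← this, conjTranspose_mul]
        simp only [Matrix.mul_assoc]
      rw [e2]
      refine det_compress_cdiag_le hU (isometry_mul (hT z hz) hW) _ fun g _ => ?_
      refine Finset.prod_le_one (fun i _ => by positivity) fun i _ => ?_
      have : ‖entirePow (a (g i)) z‖ ≤ 1 := by
        unfold entirePow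
        split_ifs
        · simp
        · rw [Complex.norm_exp, Complex.re_mul_ofReal, hz]; simp
      exact pow_le_one₀ (norm_nonneg _) this
  have h1 : ∀ z : ℂ, z.re = 1 → ‖f z‖ ≤ b := by
    intro z hz
    have hz' : (z - 1).re = 0 := by simp [hz]
    set T := D (z - 1) with hTdef
    let D₁ := cdiag V (fun i => (d i : ℂ))
    let R := cdiag U (fun i => ((√(a i) : ℝ) : ℂ))
    -- the logarithm of a vanishing eigenvalue is `0`, so `S` is unitary
    let S := cdiag U (fun i => Complex.exp ((z - 1) * (Real.log (a i) : ℂ)))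
    have hS : Sᴴ * S = 1 := cdiag_unitary hU _ fun i => by
      rw [Complex.norm_exp, Complex.re_mul_ofReal, hz']; simp
    have hexp : ∀ c : ℝ, 0 < c →
        entirePow c z = c * Complex.exp ((z - 1) * (Real.log c : ℂ)) := by
      intro c hc
      rw [entirePow, if_neg hc.ne']
      conv_rhs => rw [← Real.exp_log hc, Complex.ofReal_exp, ← Complex.exp_add, Real.exp_log hc]
      congr 1; ring
    have hD1 : D z = T * D₁ := by
      simp only [hTdef, D, D₁]
      rw [cdiag_mul hV]
      congr 1
      ext i
      rw [hexp _ (hd i), entirePow, if_neg (hd i).ne', mul_comm]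
    have hD2 : D z = D₁ * T := by
      rw [hD1]
      simp only [hTdef, D, D₁]
      rw [cdiag_mul hV, cdiag_mul hV]
      simp only [mul_comm]
    have hA : A z = R * (S * R) := by
      simp only [A, R, S]
      rw [cdiag_mul hU, cdiag_mul hU]
      congr 1
      ext i
      rcases (ha i).eq_or_lt with h | h
      · simp [← h, entirePow]
      · rw [hexp _ h]
        have : ((a i : ℝ) : ℂ) = (√(a i) : ℝ) * (√(a i) : ℝ) := by
          rw [← Complex.ofReal_mul, Real.mul_self_sqrt h.le]
        rw [this]; ring
    have hRR : R * R = cdiag U (fun i => (a i : ℂ)) := by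
      simp only [R]
      rw [cdiag_mul hU]
      congr 1
      ext i
      rw [← Complex.ofReal_mul, Real.mul_self_sqrt (ha i)]
    have hRs : Rᴴ = R := by simp only [R]; rw [cdiag_conjTranspose]; simp
    have hDs : D₁ᴴ = D₁ := by simp only [D₁]; rw [cdiag_conjTranspose]; simp
    have hcomp : ∀ Q : Matrix (Fin n) (Fin k) ℂ, (R * (D₁ * Q))ᴴ * (R * (D₁ * Q)) =
        Qᴴ * cdiag P (fun i => (x i : ℂ)) * Q := by
      intro Q
      rw [← hX, ← hRR]
      simp only [conjTranspose_mul, hRs, hDs, Matrix.mul_assoc]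
      rfl
    have e : Wᴴ * (D z * A z * D z) * W =
        (R * (D₁ * (Tᴴ * W)))ᴴ * (S * (R * (D₁ * (T * W)))) := by
      nth_rewrite 1 [hD1]
      rw [hD2, hA]
      simp only [conjTranspose_mul, conjTranspose_conjTranspose, hRs, hDs, Matrix.mul_assoc]
    simp only [f, e]
    apply norm_det_conjTranspose_mul_le
    · rw [hcomp]
      exact det_compress_cdiag_le hP (isometry_mul (hT' _ hz') hW) x hb
    · rw [conjTranspose_mul, Matrix.mul_assoc, ← Matrix.mul_assoc Sᴴ, hS, Matrix.one_mul, hcomp]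
      exact det_compress_cdiag_le hP (isometry_mul (hT _ hz') hW) x hb
  have hθ : (θ : ℂ) ∈ Complex.HadamardThreeLines.verticalClosedStrip 0 1 := by
    simp [Complex.HadamardThreeLines.verticalClosedStrip, hθ0.le, hθ1.le]
  have key := Complex.HadamardThreeLines.norm_le_interp_of_mem_verticalClosedStrip₀₁' f hθ
    hf.1.diffContOnCl (by
      obtain ⟨K, hK⟩ := hf.2
      refine ⟨K, ?_⟩
      rintro _ ⟨z, hz, rfl⟩
      exact hK z hz.1 hz.2) h0 h1
  simp only [Complex.ofReal_re, Real.one_rpow, one_mul, f, D, A] at key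
  simpa only [entirePow_ofReal (ha _) hθ0, entirePow_ofReal (hd _).le hθ0] using key

/-! ### Functional calculus and the trace inequality -/

theorem trace_cdiag {n : ℕ} {U : Matrix (Fin n) (Fin n) ℂ} (hU : Uᴴ * U = 1)
    (a : Fin n → ℂ) : (cdiag U a).trace = ∑ i, a i := by
  rw [cdiag, trace_mul_comm, ← Matrix.mul_assoc, hU, Matrix.one_mul, trace_diagonal]

theorem eq_zero_of_cdiag_eq_zero {n : ℕ} {U : Matrix (Fin n) (Fin n) ℂ} (hU : Uᴴ * U = 1)
    {a : Fin n → ℂ} (h : cdiag U a = 0) (i : Fin n) : a i = 0 := by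
  have h1 : Uᴴ * cdiag U a * U = diagonal a := by
    unfold cdiag
    simp only [Matrix.mul_assoc]
    rw [hU, Matrix.mul_one, ← Matrix.mul_assoc, hU, Matrix.one_mul]
  rw [h] at h1
  have h2 := congrFun (congrFun h1 i) i
  simpa using h2.symm

/-- `matFun` may be computed in any orthonormal eigenbasis. -/
theorem matFun_cdiag {n : ℕ} {U : Matrix (Fin n) (Fin n) ℂ} (hU : Uᴴ * U = 1)
    (a : Fin n → ℝ) (f : ℝ → ℝ) :
    matFun (cdiag U (fun i => (a i : ℂ))) f = cdiag U (fun i => (f (a i) : ℂ)) := by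
  have hA : (cdiag U (fun i => (a i : ℂ))).IsHermitian := by
    rw [IsHermitian, cdiag_conjTranspose]; simp
  rw [matFun, dif_pos hA]
  have hspec := hA.spectral_theorem
  rw [Unitary.conjStarAlgAut_apply] at hspec
  set Q : Matrix (Fin n) (Fin n) ℂ := (hA.eigenvectorUnitary : Matrix (Fin n) (Fin n) ℂ) with hQ
  have hQs : Qᴴ * Q = 1 := by
    rw [← star_eq_conjTranspose]
    exact Unitary.coe_star_mul_self hA.eigenvectorUnitary
  have hQs' : Q * Qᴴ = 1 := mul_eq_one_comm.1 hQs
  have hU' : U * Uᴴ = 1 := mul_eq_one_comm.1 hU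
  rw [star_eq_conjTranspose] at hspec ⊢
  -- the change of basis `Uᴴ Q` intertwines the eigenvalues, hence also their images under `f`
  have hint : diagonal (fun i => (a i : ℂ)) * (Uᴴ * Q) =
      (Uᴴ * Q) * diagonal (fun i => (hA.eigenvalues i : ℂ)) := by
    have h1 : Uᴴ * cdiag U (fun i => (a i : ℂ)) * Q = diagonal (fun i => (a i : ℂ)) * (Uᴴ * Q) := by
      simp only [cdiag, Matrix.mul_assoc]
      rw [← Matrix.mul_assoc Uᴴ U, hU, Matrix.one_mul]
    have h2 : Uᴴ * cdiag U (fun i => (a i : ℂ)) * Q =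
        (Uᴴ * Q) * diagonal (fun i => (hA.eigenvalues i : ℂ)) := by
      conv_lhs => rw [hspec]
      simp only [Matrix.mul_assoc]
      rw [hQs, Matrix.mul_one]
      rfl
    rw [← h1, h2]
  have hint' : diagonal (fun i => (f (a i) : ℂ)) * (Uᴴ * Q) =
      (Uᴴ * Q) * diagonal (fun i => (f (hA.eigenvalues i) : ℂ)) := by
    ext i j
    have h := congrFun (congrFun hint i) j
    rw [diagonal_mul, mul_diagonal] at h ⊢
    by_cases h0 : (Uᴴ * Q) i j = 0
    · simp [h0]
    · rw [mul_comm] at h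
      have h1 : a i = hA.eigenvalues j := by exact_mod_cast mul_left_cancel₀ h0 h
      rw [h1, mul_comm]
  calc Q * diagonal (fun i => (f (hA.eigenvalues i) : ℂ)) * Qᴴ
      = U * ((Uᴴ * Q) * diagonal (fun i => (f (hA.eigenvalues i) : ℂ))) * Qᴴ := by
        simp only [← Matrix.mul_assoc]; rw [hU', Matrix.one_mul]
    _ = cdiag U (fun i => (f (a i) : ℂ)) := by
        rw [← hint']
        simp only [cdiag, Matrix.mul_assoc]
        rw [hQs', Matrix.mul_one]

theorem mrpow_cdiag {n : ℕ} {U : Matrix (Fin n) (Fin n) ℂ} (hU : Uᴴ * U = 1)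
    (a : Fin n → ℝ) (t : ℝ) :
    mrpow (cdiag U (fun i => (a i : ℂ))) t = cdiag U (fun i => ((a i ^ t : ℝ) : ℂ)) :=
  matFun_cdiag hU a _

theorem exists_cdiag {n : ℕ} {A : Matrix (Fin n) (Fin n) ℂ} (hA : A.IsHermitian) :
    ∃ U : Matrix (Fin n) (Fin n) ℂ, Uᴴ * U = 1 ∧
      A = cdiag U (fun i => (hA.eigenvalues i : ℂ)) := by
  refine ⟨hA.eigenvectorUnitary, ?_, ?_⟩
  · rw [← star_eq_conjTranspose]
    exact Unitary.coe_star_mul_self hA.eigenvectorUnitary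
  · conv_lhs => rw [hA.spectral_theorem, Unitary.conjStarAlgAut_apply]
    rfl

theorem exists_cdiag_antitone {n : ℕ} {A : Matrix (Fin n) (Fin n) ℂ} (hA : A.PosSemidef) :
    ∃ (U : Matrix (Fin n) (Fin n) ℂ) (x : Fin n → ℝ), Uᴴ * U = 1 ∧ Antitone x ∧
      (∀ i, 0 ≤ x i) ∧ A = cdiag U (fun i => (x i : ℂ)) := by
  obtain ⟨U, hU, hAU⟩ := exists_cdiag hA.1
  set x := hA.1.eigenvalues
  let s := Tuple.sort (fun i => -x i)
  have hs := Tuple.monotone_sort (fun i => -x i)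
  refine ⟨U.submatrix id s, x ∘ s, ?_, fun i j hij => ?_, fun i => hA.eigenvalues_nonneg _, ?_⟩
  · have : (U.submatrix id s)ᴴ * U.submatrix id s = (Uᴴ * U).submatrix s s := by
      rw [conjTranspose_submatrix, ← submatrix_mul _ _ _ _ _ Function.bijective_id]
    rw [this, hU, submatrix_one_equiv]
  · simpa using hs hij
  · conv_lhs => rw [hAU]
    have h1 : diagonal (fun i => ((x ∘ s) i : ℂ)) =
        (diagonal (fun i => (x i : ℂ))).submatrix s s := by
      ext i j; simp [diagonal_apply]
    rw [cdiag, cdiag, h1, conjTranspose_submatrix, submatrix_mul_equiv, submatrix_mul_equiv,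
      submatrix_id_id]

/-- The Araki–Lieb–Thirring inequality. With `x` and `y` the eigenvalues of `D A D` and of
`D^θ A^θ D^θ`, the three lines theorem shows that `y` is weakly log-majorized by `x ^ θ`. -/
theorem sum_rpow_le {n : ℕ} {U V P Q : Matrix (Fin n) (Fin n) ℂ} (hU : Uᴴ * U = 1)
    (hV : Vᴴ * V = 1) (hP : Pᴴ * P = 1) (hQ : Qᴴ * Q = 1) {a d x y : Fin n → ℝ}
    (ha : ∀ i, 0 ≤ a i) (hd : ∀ i, 0 < d i) {θ : ℝ} (hθ0 : 0 < θ) (hθ1 : θ < 1)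
    (hx : ∀ i, 0 ≤ x i) (hy : ∀ i, 0 ≤ y i) (hxa : Antitone x) (hya : Antitone y)
    (hX : cdiag V (fun i => (d i : ℂ)) * cdiag U (fun i => (a i : ℂ)) *
      cdiag V (fun i => (d i : ℂ)) = cdiag P (fun i => (x i : ℂ)))
    (hY : cdiag V (fun i => ((d i ^ θ : ℝ) : ℂ)) * cdiag U (fun i => ((a i ^ θ : ℝ) : ℂ)) *
      cdiag V (fun i => ((d i ^ θ : ℝ) : ℂ)) = cdiag Q (fun i => (y i : ℂ)))
    {q : ℝ} (hq : 0 < q) : ∑ i, y i ^ q ≤ ∑ i, x i ^ (θ * q) := by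
  have hmaj : ∀ k (hk : k ≤ n), ∏ j : Fin k, y (Fin.castLE hk j) ≤
      (∏ j : Fin k, x (Fin.castLE hk j)) ^ θ := by
    intro k hk
    -- test against the eigenvectors of the `k` largest eigenvalues `y`
    let W : Matrix (Fin n) (Fin k) ℂ := Q.submatrix id (Fin.castLE hk)
    have hQW : Qᴴ * W = (1 : Matrix (Fin n) (Fin n) ℂ).submatrix id (Fin.castLE hk) := by
      have := submatrix_mul Qᴴ Q id id (Fin.castLE hk) Function.bijective_id
      rw [hQ] at this
      rw [this, submatrix_id_id]
    have hWW : Wᴴ * W = 1 := by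
      have h1 : Wᴴ * W = (Qᴴ * W).submatrix (Fin.castLE hk) id := by
        rw [submatrix_mul _ _ _ id _ Function.bijective_id, submatrix_id_id]
        simp only [W, conjTranspose_submatrix]
      rw [h1, hQW]
      ext i j
      simp [one_apply, Fin.ext_iff]
    have hWY : Wᴴ * cdiag Q (fun i => (y i : ℂ)) * W =
        diagonal (fun j => (y (Fin.castLE hk j) : ℂ)) := by
      have h1 : Wᴴ * cdiag Q (fun i => (y i : ℂ)) * W =
          (Qᴴ * W)ᴴ * diagonal (fun i => (y i : ℂ)) * (Qᴴ * W) := by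
        simp only [cdiag, conjTranspose_mul, conjTranspose_conjTranspose, Matrix.mul_assoc]
      rw [h1, hQW]
      ext i j
      simp [Matrix.mul_apply, one_apply, diagonal_apply, eq_comm]
      split_ifs with hij
      · rw [hij]
      · rfl
    have h := det_three_lines hU hV hP ha hd hθ0 hθ1 hWW hX
      (fun f hf => prod_injective_le hk x hx hxa f hf)
    rw [hY, hWY, det_diagonal, ← Complex.ofReal_prod, Complex.norm_real, Real.norm_eq_abs,
      abs_of_nonneg (Finset.prod_nonneg fun _ _ => hy _)] at h
    exact h
  let xs : ℕ → ℝ := fun i => if h : i < n then x ⟨i, h⟩ ^ (θ * q) else 0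
  let ys : ℕ → ℝ := fun i => if h : i < n then y ⟨i, h⟩ ^ q else 0
  have key : ∑ i ∈ Finset.range n, ys i ≤ ∑ i ∈ Finset.range n, xs i := by
    apply sum_le_of_prod_le
    · intro i
      simp only [xs]
      split_ifs
      · exact Real.rpow_nonneg (hx _) _
      · exact le_rfl
    · intro i
      simp only [ys]
      split_ifs
      · exact Real.rpow_nonneg (hy _) _
      · exact le_rfl
    · intro i hi
      simp only [ys]
      rw [dif_pos hi, dif_pos (by omega)]
      exact Real.rpow_le_rpow (hy _) (hya (by simp [Fin.le_def])) hq.le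
    · intro k hk
      have e1 : ∏ i ∈ Finset.range k, ys i = (∏ j : Fin k, y (Fin.castLE hk j)) ^ q := by
        rw [Finset.prod_range, ← Real.finsetProd_rpow _ _ (fun _ _ => hy _)]
        refine Finset.prod_congr rfl fun j _ => ?_
        simp only [ys]
        rw [dif_pos (j.2.trans_le hk)]
        rfl
      have e2 : ∏ i ∈ Finset.range k, xs i = (∏ j : Fin k, x (Fin.castLE hk j)) ^ (θ * q) := by
        rw [Finset.prod_range, ← Real.finsetProd_rpow _ _ (fun _ _ => hx _)]
        refine Finset.prod_congr rfl fun j _ => ?_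
        simp only [xs]
        rw [dif_pos (j.2.trans_le hk)]
        rfl
      rw [e1, e2, Real.rpow_mul (Finset.prod_nonneg fun _ _ => hx _)]
      exact Real.rpow_le_rpow (Finset.prod_nonneg fun _ _ => hy _) (hmaj k hk) hq.le
  rw [Finset.sum_range, Finset.sum_range] at key
  simpa [xs, ys] using key

theorem eq_zero_of_cdiag_conj_eq_zero {n : ℕ} {V M : Matrix (Fin n) (Fin n) ℂ}
    (hV : Vᴴ * V = 1) {d : Fin n → ℝ} (hd : ∀ i, 0 < d i)
    (h : cdiag V (fun i => (d i : ℂ)) * M * cdiag V (fun i => (d i : ℂ)) = 0) : M = 0 := by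
  have h1 : cdiag V (fun i => ((d i)⁻¹ : ℂ)) * cdiag V (fun i => (d i : ℂ)) = 1 := by
    rw [cdiag_mul hV, ← cdiag_one hV]
    congr 1
    ext i
    exact inv_mul_cancel₀ (by exact_mod_cast (hd i).ne')
  have h2 := mul_eq_one_comm.1 h1
  calc M = cdiag V (fun i => ((d i)⁻¹ : ℂ)) * (cdiag V (fun i => (d i : ℂ)) * M *
        cdiag V (fun i => (d i : ℂ))) * cdiag V (fun i => ((d i)⁻¹ : ℂ)) := by
        simp only [Matrix.mul_assoc]
        rw [h2, Matrix.mul_one, ← Matrix.mul_assoc, h1, Matrix.one_mul]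
    _ = 0 := by rw [h]; simp

/-- With `A = σ^{-1/2} ρ σ^{-1/2}`, the sandwiched quasi-entropy is the sum of the `α`-th powers of
the eigenvalues `x` of `σ^{1/(2α)} A σ^{1/(2α)}`, and the geometric one is the sum of the
eigenvalues `y` of `σ^{1/2} A^α σ^{1/2}`. -/
theorem exists_spectral_data {n : ℕ} {ρ σ : Matrix (Fin n) (Fin n) ℂ} (hρ : ρ.PosSemidef)
    (hρ1 : ρ.trace = 1) (hσ : σ.PosDef) {α : ℝ} (hα : 0 < α) :
    ∃ (U V P Q : Matrix (Fin n) (Fin n) ℂ) (a s x y : Fin n → ℝ),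
      Uᴴ * U = 1 ∧ Vᴴ * V = 1 ∧ Pᴴ * P = 1 ∧ Qᴴ * Q = 1 ∧
      (∀ i, 0 ≤ a i) ∧ (∀ i, 0 < s i) ∧ (∀ i, 0 ≤ x i) ∧ (∀ i, 0 ≤ y i) ∧
      Antitone x ∧ Antitone y ∧
      cdiag V (fun i => ((s i ^ (1 / (2 * α)) : ℝ) : ℂ)) * cdiag U (fun i => (a i : ℂ)) *
        cdiag V (fun i => ((s i ^ (1 / (2 * α)) : ℝ) : ℂ)) = cdiag P (fun i => (x i : ℂ)) ∧
      cdiag V (fun i => ((s i ^ (1 / 2 : ℝ) : ℝ) : ℂ)) *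
        cdiag U (fun i => ((a i ^ α : ℝ) : ℂ)) *
        cdiag V (fun i => ((s i ^ (1 / 2 : ℝ) : ℝ) : ℂ)) = cdiag Q (fun i => (y i : ℂ)) ∧
      (sandQuasiEntropy α ρ σ).re = ∑ i, x i ^ α ∧ (geomQuasiEntropy α ρ σ).re = ∑ i, y i ∧
      0 < (sandQuasiEntropy α ρ σ).re ∧ 0 < (geomQuasiEntropy α ρ σ).re := by
  have hρ0 : ρ ≠ 0 := by rintro rfl; simp at hρ1
  obtain ⟨V, hV, hσV⟩ := exists_cdiag hσ.1
  set s := hσ.1.eigenvalues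
  have hs : ∀ i, 0 < s i := hσ.eigenvalues_pos
  let S : ℝ → Matrix (Fin n) (Fin n) ℂ := fun t => cdiag V (fun i => ((s i ^ t : ℝ) : ℂ))
  have hS : ∀ t, mrpow σ t = S t := fun t => by rw [hσV]; exact mrpow_cdiag hV s t
  have hSS : ∀ t u, S t * S u = S (t + u) := fun t u => by
    simp only [S]
    rw [cdiag_mul hV]
    congr 1
    ext i
    rw [← Complex.ofReal_mul, Real.rpow_add (hs i)]
  have hS1 : S 1 = σ := by simp only [S, Real.rpow_one]; exact hσV.symm
  have hSh : ∀ t, (S t)ᴴ = S t := fun t => by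
    simp only [S]; rw [cdiag_conjTranspose]; simp
  have hSpsd : ∀ t {M : Matrix (Fin n) (Fin n) ℂ}, M.PosSemidef → (S t * M * S t).PosSemidef := by
    intro t M hM
    simpa [hSh] using hM.mul_mul_conjTranspose_same (S t)
  have hSinj : ∀ t {M : Matrix (Fin n) (Fin n) ℂ}, S t * M * S t = 0 → M = 0 := fun t M h =>
    eq_zero_of_cdiag_conj_eq_zero hV (fun i => Real.rpow_pos_of_pos (hs i) t) h
  have hA := hSpsd (-(1 / 2)) hρ
  obtain ⟨U, hU, hAU⟩ := exists_cdiag hA.1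
  set a := hA.1.eigenvalues
  have ha : ∀ i, 0 ≤ a i := hA.eigenvalues_nonneg
  have hpow : ∀ t : ℝ, (cdiag U (fun i => ((a i ^ t : ℝ) : ℂ))).PosSemidef := by
    intro t
    have : (diagonal (fun i => ((a i ^ t : ℝ) : ℂ))).PosSemidef :=
      PosSemidef.diagonal fun i => by
        exact Complex.zero_le_real.2 (Real.rpow_nonneg (ha i) t)
    exact this.mul_mul_conjTranspose_same U
  have hsand : S ((1 - α) / (2 * α)) * ρ * S ((1 - α) / (2 * α)) =
      S (1 / (2 * α)) * cdiag U (fun i => (a i : ℂ)) * S (1 / (2 * α)) := by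
    rw [← hAU]
    have e1 : S ((1 - α) / (2 * α)) = S (1 / (2 * α)) * S (-(1 / 2)) := by
      rw [hSS]; congr 1; field_simp; ring
    have e2 : S ((1 - α) / (2 * α)) = S (-(1 / 2)) * S (1 / (2 * α)) := by
      rw [hSS]; congr 1; field_simp; ring
    nth_rewrite 1 [e1]
    rw [e2]
    simp only [Matrix.mul_assoc]
  obtain ⟨P, x, hP, hxa, hx, hX⟩ := exists_cdiag_antitone (hSpsd ((1 - α) / (2 * α)) hρ)
  obtain ⟨Q, y, hQ, hya, hy, hY⟩ := exists_cdiag_antitone (hSpsd (1 / 2) (hpow α))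
  have e1 : sandQuasiEntropy α ρ σ = ((∑ i, x i ^ α : ℝ) : ℂ) := by
    rw [sandQuasiEntropy, hS, hX, mrpow_cdiag hP, trace_cdiag hP, Complex.ofReal_sum]
  have e2 : geomQuasiEntropy α ρ σ = ((∑ i, y i : ℝ) : ℂ) := by
    have h1 : σ = S (1 / 2) * S (1 / 2) := by rw [hSS, ← hS1]; norm_num
    rw [geomQuasiEntropy, hS, hAU, mrpow_cdiag hU, Complex.ofReal_sum, ← trace_cdiag hQ, ← hY,
      trace_mul_comm _ (S (1 / 2)), ← Matrix.mul_assoc, ← h1]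
  refine ⟨U, V, P, Q, a, s, x, y, hU, hV, hP, hQ, ha, hs, hx, hy, hxa, hya, ?_, hY, ?_, ?_, ?_, ?_⟩
  · rw [← hX, hsand]
  · rw [e1, Complex.ofReal_re]
  · rw [e2, Complex.ofReal_re]
  · rw [e1, Complex.ofReal_re]
    refine lt_of_le_of_ne (Finset.sum_nonneg fun i _ => Real.rpow_nonneg (hx i) α) fun h => hρ0 ?_
    have h0 := (Finset.sum_eq_zero_iff_of_nonneg
      fun i _ => Real.rpow_nonneg (hx i) α).1 h.symm
    refine hSinj _ (hX.trans ?_)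
    have : ∀ i, x i = 0 := fun i =>
      (Real.rpow_eq_zero (hx i) hα.ne').1 (h0 i (Finset.mem_univ i))
    simp [cdiag, this]
  · rw [e2, Complex.ofReal_re]
    refine lt_of_le_of_ne (Finset.sum_nonneg fun i _ => hy i) fun h => hρ0 ?_
    have h0 := (Finset.sum_eq_zero_iff_of_nonneg fun i _ => hy i).1 h.symm
    have h1 : cdiag U (fun i => ((a i ^ α : ℝ) : ℂ)) = 0 := by
      refine hSinj _ (hY.trans ?_)
      have : ∀ i, y i = 0 := fun i => h0 i (Finset.mem_univ i)
      simp [cdiag, this]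
    have h2 : ∀ i, a i = 0 := fun i => (Real.rpow_eq_zero (ha i) hα.ne').1
      (by exact_mod_cast eq_zero_of_cdiag_eq_zero hU h1 i)
    refine hSinj _ (hAU.trans ?_)
    simp [cdiag, h2]

/-- **Araki–Lieb–Thirring consequence.** For a density matrix `ρ` and positive definite `σ`:
`Q̂_α ≤ Q̃_α` for `α ∈ (0,1)`, the reverse for `α ∈ (1,∞)`, and consequently
`D̃_α(ρ‖σ) ≤ D̂_α(ρ‖σ)` for all `α ∈ (0,1) ∪ (1,∞)`. -/
theorem sandwiched_le_geometric {n : ℕ}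
    (ρ σ : Matrix (Fin n) (Fin n) ℂ) (hρ : ρ.PosSemidef) (hρ1 : ρ.trace = 1)
    (hσ : σ.PosDef) :
    (∀ α ∈ Set.Ioo (0 : ℝ) 1,
      (geomQuasiEntropy α ρ σ).re ≤ (sandQuasiEntropy α ρ σ).re) ∧
    (∀ α ∈ Set.Ioi (1 : ℝ),
      (sandQuasiEntropy α ρ σ).re ≤ (geomQuasiEntropy α ρ σ).re) ∧
    (∀ α ∈ Set.Ioo (0 : ℝ) 1 ∪ Set.Ioi 1,
      (α - 1)⁻¹ * Real.log (sandQuasiEntropy α ρ σ).re ≤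
        (α - 1)⁻¹ * Real.log (geomQuasiEntropy α ρ σ).re) := by
  have hlt : ∀ α ∈ Set.Ioo (0 : ℝ) 1,
      (geomQuasiEntropy α ρ σ).re ≤ (sandQuasiEntropy α ρ σ).re := by
    rintro α ⟨h0, h1⟩
    obtain ⟨U, V, P, Q, a, s, x, y, hU, hV, hP, hQ, ha, hs, hx, hy, hxa, hya, hX, hY, e1, e2, -⟩ :=
      exists_spectral_data hρ hρ1 hσ h0
    have hpow : ∀ i, (s i ^ (1 / (2 * α))) ^ α = s i ^ (1 / 2 : ℝ) := fun i => by
      rw [← Real.rpow_mul (hs i).le]; congr 1; field_simp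
    have := sum_rpow_le hU hV hP hQ ha (fun i => Real.rpow_pos_of_pos (hs i) (1 / (2 * α))) h0 h1
      hx hy hxa hya hX (by simpa only [hpow] using hY) one_pos
    simpa [e1, e2] using this
  have hgt : ∀ α ∈ Set.Ioi (1 : ℝ),
      (sandQuasiEntropy α ρ σ).re ≤ (geomQuasiEntropy α ρ σ).re := by
    intro α h1
    have h1 : 1 < α := h1
    have h0 : 0 < α := one_pos.trans h1
    obtain ⟨U, V, P, Q, a, s, x, y, hU, hV, hP, hQ, ha, hs, hx, hy, hxa, hya, hX, hY, e1, e2, -⟩ :=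
      exists_spectral_data hρ hρ1 hσ h0
    -- the roles are exchanged: `σ^{1/(2α)} A σ^{1/(2α)}` comes from `σ^{1/2} A^α σ^{1/2}` by
    -- taking `θ = 1 / α`
    have hpow : ∀ i, (s i ^ (1 / 2 : ℝ)) ^ (1 / α) = s i ^ (1 / (2 * α)) := fun i => by
      rw [← Real.rpow_mul (hs i).le]; congr 1; field_simp
    have hpow' : ∀ i, (a i ^ α) ^ (1 / α) = a i := fun i => by
      rw [← Real.rpow_mul (ha i), mul_one_div_cancel h0.ne', Real.rpow_one]
    have := sum_rpow_le hU hV hQ hP (fun i => Real.rpow_nonneg (ha i) α)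
      (fun i => Real.rpow_pos_of_pos (hs i) (1 / 2)) (one_div_pos.2 h0)
      ((div_lt_one h0).2 h1) hy hx hya hxa hY (by simpa only [hpow, hpow'] using hX) h0
    rw [one_div_mul_cancel h0.ne'] at this
    simpa [e1, e2] using this
  refine ⟨hlt, hgt, ?_⟩
  have hpos : ∀ α : ℝ, 0 < α →
      0 < (sandQuasiEntropy α ρ σ).re ∧ 0 < (geomQuasiEntropy α ρ σ).re := by
    intro α h0
    obtain ⟨U, V, P, Q, a, s, x, y, -, -, -, -, -, -, -, -, -, -, -, -, -, -, h1, h2⟩ :=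
      exists_spectral_data hρ hρ1 hσ h0
    exact ⟨h1, h2⟩
  rintro α (hα | hα)
  · exact mul_le_mul_of_nonpos_left (Real.log_le_log (hpos α hα.1).2 (hlt α hα))
      (inv_nonpos.2 (by linarith [hα.2]))
  · have h1 : 1 < α := hα
    exact mul_le_mul_of_nonneg_left (Real.log_le_log (hpos α (by linarith)).1 (hgt α hα))
      (inv_nonneg.2 (by linarith))
end

section
/- Data-processing inequality for the geometric Rényi relative quasi-entropy under partial trace, via the Petz recovery map: let ρ_AB be a positive definite density matrix on a bipartite space and σ_AB a positive definite matrix with marginals ρ_A = Tr_B[ρ_AB], σ_A = Tr_B[σ_AB]. Then for α ∈ (1,2], Tr[σ_AB (σ_AB^{−1/2} ρ_AB σ_AB^{−1/2})^α] ≥ Tr[σ_A (σ_A^{−1/2} ρ_A σ_A^{−1/2})^α], and for α ∈ (0,1) the inequality is reversed. Equivalently, D̂_α(ρ_AB‖σ_AB) ≥ D̂_α(ρ_A‖σ_A) for all α ∈ (0,1) ∪ (1,2]. -/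
/-!
For `X = σ^{-1/2} ρ σ^{-1/2}` the functional `f ↦ Tr[σ f(X)]` is integration against a discrete
positive measure on `(0, ∞)`. Its mass is `Tr σ`, its mean `Tr ρ`, its second moment
`Tr[ρ σ⁻¹ ρ]` and its Stieltjes transform `t ↦ Tr[σ (t σ + ρ)⁻¹ σ]` (`exists_geom_weights`).

The map `(S, T) ↦ Tr[S T⁻¹ S]` decreases under the partial trace, by completing a square
(`trace_mul_inv_mul_ptraceB_le`), which is the resolvent case of the operator Jensen inequality
for the adjoint of the Petz recovery map. So passing to marginals preserves mass and mean, and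
decreases the second moment and the Stieltjes transform. The case `α = 2` is the second moment.
The other exponents follow by integrating over `t`, since `x ^ α` is a positive superposition of
`1 - t (t + x)⁻¹` for `0 < α < 1` and of `t⁻¹ x + t (t + x)⁻¹ - 1` for `1 < α < 2`
(`sum_rpow_le_of_lt_one`, `sum_rpow_le_of_one_lt`).
-/

open Matrix
open scoped ComplexOrder

/-- Partial trace over the second tensor factor. -/
noncomputable def ptraceB {a b : ℕ}
    (M : Matrix (Fin a × Fin b) (Fin a × Fin b) ℂ) : Matrix (Fin a) (Fin a) ℂ :=
  Matrix.of fun i j => ∑ k : Fin b, M (i, k) (j, k)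

/-! ### Functional calculus -/

section matFun

variable {d : Type*} [Fintype d] [DecidableEq d] {A : Matrix d d ℂ}

lemma matFun_mul (hA : A.IsHermitian) (f g : ℝ → ℝ) :
    matFun A f * matFun A g = matFun A (fun x => f x * g x) := by
  have hU : (star hA.eigenvectorUnitary : Matrix d d ℂ) * (hA.eigenvectorUnitary : Matrix d d ℂ) = 1 :=
    Unitary.coe_star_mul_self _
  simp only [matFun, dif_pos hA]
  calc _ = (hA.eigenvectorUnitary : Matrix d d ℂ) *
      Matrix.diagonal (fun i => (f (hA.eigenvalues i) : ℂ)) *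
      ((star hA.eigenvectorUnitary : Matrix d d ℂ) * (hA.eigenvectorUnitary : Matrix d d ℂ)) *
      Matrix.diagonal (fun i => (g (hA.eigenvalues i) : ℂ)) *
      (star hA.eigenvectorUnitary : Matrix d d ℂ) := by simp only [Matrix.mul_assoc]
    _ = _ := by
      rw [hU, Matrix.mul_one, Matrix.mul_assoc (hA.eigenvectorUnitary : Matrix d d ℂ),
        Matrix.diagonal_mul_diagonal]
      push_cast
      rfl

lemma matFun_one (hA : A.IsHermitian) : matFun A (fun _ => 1) = 1 := by
  have hU : (hA.eigenvectorUnitary : Matrix d d ℂ) * (star hA.eigenvectorUnitary : Matrix d d ℂ) = 1 :=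
    Unitary.coe_mul_star_self _
  simp only [matFun, dif_pos hA]
  simp [hU]

lemma matFun_id (hA : A.IsHermitian) : matFun A (fun x => x) = A := by
  conv_rhs => rw [hA.spectral_theorem, Unitary.conjStarAlgAut_apply]
  simp only [matFun, dif_pos hA]
  rfl

lemma matFun_add_const (hA : A.IsHermitian) (t : ℝ) :
    matFun A (fun x => t + x) = (t : ℂ) • (1 : Matrix d d ℂ) + A := by
  have h : matFun A (fun x => t + x) =
      (t : ℂ) • matFun A (fun _ => 1) + matFun A (fun x => x) := by
    simp only [matFun, dif_pos hA]
    rw [← Matrix.smul_mul, ← Matrix.mul_smul, ← Matrix.add_mul, ← Matrix.mul_add]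
    congr 2
    ext i j
    by_cases h : i = j <;> simp [h, Matrix.diagonal]
  rw [h, matFun_one hA, matFun_id hA]

lemma matFun_congr (hA : A.PosDef) {f g : ℝ → ℝ} (h : ∀ x, 0 < x → f x = g x) :
    matFun A f = matFun A g := by
  simp only [matFun, dif_pos hA.1]
  congr 3
  ext i
  rw [h _ (hA.eigenvalues_pos i)]

lemma matFun_isHermitian (A : Matrix d d ℂ) (f : ℝ → ℝ) : (matFun A f).IsHermitian := by
  unfold matFun
  split_ifs with hA
  · refine Matrix.isHermitian_mul_mul_conjTranspose _ ?_
    refine Matrix.isHermitian_diagonal_of_self_adjoint _ ?_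
    ext i
    simp
  · exact Matrix.isHermitian_zero

/-- The functional `f ↦ Tr[σ f(X)]` is integration against a discrete positive measure: the
points are the eigenvalues of `X`, the weights the diagonal entries of `σ` in its eigenbasis. -/
lemma exists_spectral_weights {σ X : Matrix d d ℂ} (hσ : σ.PosDef) (hX : X.PosDef) :
    ∃ l q : d → ℝ, (∀ i, 0 < l i) ∧ (∀ i, 0 < q i) ∧
      ∀ f : ℝ → ℝ, (σ * matFun X f).trace.re = ∑ i, f (l i) * q i := by
  set U : Matrix d d ℂ := (hX.1.eigenvectorUnitary : Matrix d d ℂ) with hUdef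
  have hUi : Function.Injective U.mulVec :=
    Matrix.mulVec_injective_iff_isUnit.2 (Unitary.isUnit_coe (U := hX.1.eigenvectorUnitary))
  have hpos := hσ.conjTranspose_mul_mul_same hUi
  refine ⟨hX.1.eigenvalues, fun i => ((Uᴴ * σ * U) i i).re, hX.eigenvalues_pos,
    fun i => (Complex.pos_iff.1 hpos.diag_pos).1, fun f => ?_⟩
  have : (σ * matFun X f).trace =
      (Matrix.diagonal (fun i => (f (hX.1.eigenvalues i) : ℂ)) * (Uᴴ * σ * U)).trace := by
    simp only [matFun, dif_pos hX.1]
    rw [Matrix.trace_mul_comm, ← hUdef, Matrix.trace_mul_comm _ (Uᴴ * σ * U),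
      Matrix.mul_assoc U, Matrix.mul_assoc U, Matrix.trace_mul_comm U]
    rw [Matrix.mul_assoc, Matrix.mul_assoc, Matrix.trace_mul_comm]
    simp only [Matrix.mul_assoc]
    rfl
  rw [this]
  simp [Matrix.trace, Matrix.diagonal_mul]

end matFun

/-! ### Moments of the spectral measure -/

section moments

variable {d : Type*} [Fintype d] [DecidableEq d] {ρ σ : Matrix d d ℂ}

lemma invSqrt_mul_mul (hσ : σ.PosDef) :
    mrpow σ (-(1 / 2)) * σ * mrpow σ (-(1 / 2)) = 1 := by
  have h : mrpow σ (-(1 / 2)) * σ * mrpow σ (-(1 / 2)) =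
      mrpow σ (-(1 / 2)) * matFun σ (fun x => x) * mrpow σ (-(1 / 2)) := by
    rw [matFun_id hσ.1]
  rw [h, mrpow, matFun_mul hσ.1, matFun_mul hσ.1, ← matFun_one hσ.1]
  refine matFun_congr hσ fun x hx => ?_
  have h2 : x ^ (-(1 / 2) : ℝ) * x ^ (-(1 / 2) : ℝ) = x⁻¹ := by
    rw [← Real.rpow_add hx, ← Real.rpow_neg_one]
    norm_num
  rw [mul_right_comm, h2, inv_mul_cancel₀ hx.ne']

/-- The measure of `exists_spectral_weights` for `X = σ^{-1/2} ρ σ^{-1/2}`. Its zeroth, first and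
second moments and its Stieltjes transform are free of square roots, because
`S = σ^{-1/2}` satisfies `S σ S = 1`. -/
lemma exists_geom_weights (hρ : ρ.PosDef) (hσ : σ.PosDef) :
    ∃ l q : d → ℝ, (∀ i, 0 < l i) ∧ (∀ i, 0 < q i) ∧
      (∀ α : ℝ, (geomQuasiEntropy α ρ σ).re = ∑ i, l i ^ α * q i) ∧
      (∑ i, q i = σ.trace.re) ∧ (∑ i, l i * q i = ρ.trace.re) ∧
      (∑ i, l i ^ (2 : ℝ) * q i = (ρ * σ⁻¹ * ρ).trace.re) ∧
      (∀ t : ℝ, 0 < t → ∑ i, (t + l i)⁻¹ * q i =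
        (σ * ((t : ℂ) • σ + ρ)⁻¹ * σ).trace.re) := by
  have hS := invSqrt_mul_mul hσ
  set S := mrpow σ (-(1 / 2)) with hSdef
  have hSh : S.IsHermitian := matFun_isHermitian _ _
  have hS1 : S * (σ * S) = 1 := by rw [← Matrix.mul_assoc, hS]
  have hS2 : (σ * S) * S = 1 := mul_eq_one_comm.1 hS1
  have hS3 : S * (S * σ) = 1 := mul_eq_one_comm.1 hS
  have hSi : Function.Injective S.mulVec :=
    Matrix.mulVec_injective_iff_isUnit.2 (IsUnit.of_mul_eq_one _ hS1)
  have hSS : S * S = σ⁻¹ := by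
    refine (Matrix.inv_eq_right_inv ?_).symm
    rw [← Matrix.mul_assoc, hS2]
  have hX : (S * ρ * S).PosDef := by
    have := hρ.conjTranspose_mul_mul_same hSi
    rwa [hSh.eq] at this
  obtain ⟨l, q, hl, hq, H⟩ := exists_spectral_weights hσ hX
  refine ⟨l, q, hl, hq, fun α => H _, ?_, ?_, ?_, fun t ht => ?_⟩
  · have := H (fun _ => 1)
    rw [matFun_one hX.1] at this
    simpa using this.symm
  · rw [← H (fun x => x), matFun_id hX.1, ← Matrix.mul_assoc, Matrix.trace_mul_comm,
      ← Matrix.mul_assoc, ← Matrix.mul_assoc, hS, Matrix.one_mul]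
  · have h2 : matFun (S * ρ * S) (fun x => x ^ (2 : ℝ)) = (S * ρ * S) * (S * ρ * S) := by
      conv_rhs => rw [← matFun_id hX.1, matFun_mul hX.1]
      exact matFun_congr hX fun x _ => by rw [Real.rpow_two, sq]
    rw [← H (fun x => x ^ (2 : ℝ)), h2]
    have : σ * (S * ρ * S * (S * ρ * S)) = σ * S * (ρ * (S * S) * ρ) * S := by
      simp only [Matrix.mul_assoc]
    rw [this, Matrix.trace_mul_comm, ← Matrix.mul_assoc, hS1, Matrix.one_mul, hSS]
  · have hG : ((t : ℂ) • σ + ρ).PosDef := (hσ.smul (by exact_mod_cast ht)).add hρ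
    have hGu := (Matrix.isUnit_iff_isUnit_det _).1 hG.isUnit
    set G := (t : ℂ) • σ + ρ with hGdef
    have hshift : matFun (S * ρ * S) (fun x => t + x) = S * G * S := by
      rw [matFun_add_const hX.1, hGdef, Matrix.mul_add, Matrix.add_mul, Matrix.mul_smul,
        Matrix.smul_mul, hS]
    have hinv : matFun (S * ρ * S) (fun x => (t + x)⁻¹) * (S * G * S) = 1 := by
      rw [← hshift, matFun_mul hX.1, ← matFun_one hX.1]
      exact matFun_congr hX fun x hx => inv_mul_cancel₀ (by positivity)
    have hR : (S * G * S) * (σ * S * G⁻¹ * (S * σ)) = 1 := by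
      calc _ = S * G * (S * (σ * S)) * G⁻¹ * (S * σ) := by simp only [Matrix.mul_assoc]
        _ = S * (G * G⁻¹) * (S * σ) := by rw [hS1]; simp only [Matrix.mul_assoc, Matrix.one_mul]
        _ = 1 := by rw [Matrix.mul_nonsing_inv _ hGu, Matrix.mul_one, hS3]
    rw [← H (fun x => (t + x)⁻¹), left_inv_eq_right_inv hinv hR]
    -- `S * σ` and `σ * S` are both the inverse of `S`.
    have hcomm : S * σ = σ * S := (left_inv_eq_right_inv hS2 hS3).symm
    have h3 : σ * (σ * S * G⁻¹ * (S * σ)) = σ * (σ * S * G⁻¹ * (σ * S)) := by rw [hcomm]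
    have h4 : (σ * S) * (σ * (σ * S)) = σ * σ := by
      calc _ = σ * (S * σ * (σ * S)) := by simp only [Matrix.mul_assoc]
        _ = σ * (σ * (S * (σ * S))) := by rw [hcomm]; simp only [Matrix.mul_assoc]
        _ = σ * σ := by rw [hS1, Matrix.mul_one]
    calc (σ * (σ * S * G⁻¹ * (S * σ))).trace.re
        = ((σ * (σ * S) * G⁻¹) * (σ * S)).trace.re := by rw [h3]; simp only [Matrix.mul_assoc]
      _ = (((σ * S) * (σ * (σ * S))) * G⁻¹).trace.re := by
          rw [Matrix.trace_mul_comm]; simp only [Matrix.mul_assoc]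
      _ = (σ * G⁻¹ * σ).trace.re := by
          rw [h4, Matrix.trace_mul_comm (σ * G⁻¹), Matrix.mul_assoc]

end moments

/-! ### Partial trace -/

section ptrace

open scoped Kronecker

variable {a b : ℕ}

lemma ptraceB_posDef [NeZero b] {M : Matrix (Fin a × Fin b) (Fin a × Fin b) ℂ} (hM : M.PosDef) :
    (ptraceB M).PosDef := by
  have : ptraceB M = ∑ k : Fin b, M.submatrix (fun i => (i, k)) (fun i => (i, k)) := by
    ext i j
    simp [ptraceB, Matrix.sum_apply]
  rw [this]
  exact Matrix.posDef_sum Finset.univ_nonempty fun k _ => hM.submatrix (fun i j h => by simpa using h)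

lemma trace_ptraceB (M : Matrix (Fin a × Fin b) (Fin a × Fin b) ℂ) :
    (ptraceB M).trace = M.trace := by
  simp [ptraceB, Matrix.trace, Fintype.sum_prod_type]

lemma ptraceB_smul_add (c : ℂ) (M N : Matrix (Fin a × Fin b) (Fin a × Fin b) ℂ) :
    ptraceB (c • M + N) = c • ptraceB M + ptraceB N := by
  ext i j
  simp [ptraceB, Finset.sum_add_distrib, Finset.mul_sum]

/-- `Tr_B` is the trace-adjoint of `Z ↦ Z ⊗ 1`. -/
lemma trace_mul_kronecker_one (M : Matrix (Fin a × Fin b) (Fin a × Fin b) ℂ)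
    (Z : Matrix (Fin a) (Fin a) ℂ) :
    (M * Z ⊗ₖ (1 : Matrix (Fin b) (Fin b) ℂ)).trace = (ptraceB M * Z).trace := by
  simp only [Matrix.trace, Matrix.diag, Matrix.mul_apply, ptraceB, Matrix.of_apply,
    Fintype.sum_prod_type, Matrix.kroneckerMap_apply, Matrix.one_apply, mul_ite, mul_one, mul_zero,
    Finset.sum_ite_eq', Finset.mem_univ, if_true, Finset.sum_mul]
  refine Finset.sum_congr rfl fun i _ => ?_
  rw [Finset.sum_comm]

/-- Monotonicity of `(S, T) ↦ Tr[S T⁻¹ S]` under the partial trace. With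
`W = S - T (T_A⁻¹ S_A ⊗ 1)`, the difference of the two sides is `Tr[W* T⁻¹ W] ≥ 0`. -/
lemma trace_mul_inv_mul_ptraceB_le [NeZero b] {S T : Matrix (Fin a × Fin b) (Fin a × Fin b) ℂ}
    (hS : S.IsHermitian) (hT : T.PosDef) :
    (ptraceB S * (ptraceB T)⁻¹ * ptraceB S).trace.re ≤ (S * T⁻¹ * S).trace.re := by
  have hTA := ptraceB_posDef hT
  have hTu := (Matrix.isUnit_iff_isUnit_det _).1 hT.isUnit
  have hTAu := (Matrix.isUnit_iff_isUnit_det _).1 hTA.isUnit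
  have hSA : (ptraceB S)ᴴ = ptraceB S := by
    ext i j
    simp only [ptraceB, Matrix.conjTranspose_apply, Matrix.of_apply, star_sum]
    exact Finset.sum_congr rfl fun k _ => hS.apply _ _
  set Z := (ptraceB T)⁻¹ * ptraceB S with hZ
  have hZh : Zᴴ = ptraceB S * (ptraceB T)⁻¹ := by
    rw [hZ, Matrix.conjTranspose_mul, hSA, hTA.inv.1.eq]
  set R := Z ⊗ₖ (1 : Matrix (Fin b) (Fin b) ℂ) with hR
  have hRh : Rᴴ = Zᴴ ⊗ₖ (1 : Matrix (Fin b) (Fin b) ℂ) := by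
    rw [hR, Matrix.conjTranspose_kronecker, Matrix.conjTranspose_one]
  have hRR : R * Rᴴ = (Z * Zᴴ) ⊗ₖ (1 : Matrix (Fin b) (Fin b) ℂ) := by
    rw [hRh, hR, ← Matrix.mul_kronecker_mul, Matrix.one_mul]
  have hpos := (hT.inv.posSemidef.conjTranspose_mul_mul_same (S - T * R)).trace_nonneg
  have hexp : (S - T * R)ᴴ * T⁻¹ * (S - T * R) =
      S * T⁻¹ * S - S * R - Rᴴ * S + Rᴴ * T * R := by
    rw [Matrix.conjTranspose_sub, Matrix.conjTranspose_mul, hS.eq, hT.1.eq]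
    have e1 : Rᴴ * T * T⁻¹ = Rᴴ := Matrix.mul_nonsing_inv_cancel_right _ _ hTu
    have e2 : S * T⁻¹ * (T * R) = S * R := by
      rw [← Matrix.mul_assoc, Matrix.nonsing_inv_mul_cancel_right _ _ hTu]
    rw [Matrix.sub_mul, Matrix.sub_mul, e1, Matrix.mul_sub, Matrix.mul_sub, e2, ← Matrix.mul_assoc]
    abel
  have t1 : (S * R).trace = (ptraceB S * (ptraceB T)⁻¹ * ptraceB S).trace := by
    rw [trace_mul_kronecker_one, hZ, Matrix.mul_assoc]
  have t2 : (Rᴴ * S).trace = (ptraceB S * (ptraceB T)⁻¹ * ptraceB S).trace := by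
    rw [Matrix.trace_mul_comm, hRh, trace_mul_kronecker_one, hZh, Matrix.trace_mul_comm]
  have t3 : (Rᴴ * T * R).trace = (ptraceB S * (ptraceB T)⁻¹ * ptraceB S).trace := by
    rw [Matrix.mul_assoc, Matrix.trace_mul_comm, Matrix.mul_assoc, hRR, trace_mul_kronecker_one,
      hZh, hZ, ← Matrix.mul_assoc, Matrix.mul_nonsing_inv_cancel_left _ _ hTAu,
      Matrix.trace_mul_comm, Matrix.mul_assoc, Matrix.trace_mul_comm]
  rw [hexp, Matrix.trace_add, Matrix.trace_sub, Matrix.trace_sub, t1, t2, t3] at hpos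
  have := (Complex.nonneg_iff.1 hpos).1
  simp only [Complex.add_re, Complex.sub_re] at this
  linarith

end ptrace

/-! ### Comparing power sums of two discrete measures -/

section scalar

open MeasureTheory Real

variable {ι κ : Type} [Fintype ι] [Fintype κ] {l q : ι → ℝ} {m r : κ → ℝ}

/-- Two finite signed discrete measures on `(0, ∞)` with the same mass whose Stieltjes transforms are ordered
have oppositely ordered `p`-th moments, `0 < p < 1`: `x ^ p` is a positive superposition of
`1 - t (t + x)⁻¹`. -/
lemma sum_rpow_le_of_lt_one (hl : ∀ i, 0 < l i) (hm : ∀ j, 0 < m j)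
    (h0 : ∑ j, r j = ∑ i, q i)
    (ht : ∀ t, 0 < t → ∑ j, (t + m j)⁻¹ * r j ≤ ∑ i, (t + l i)⁻¹ * q i)
    {p : ℝ} (hp : p ∈ Set.Ioo (0 : ℝ) 1) :
    ∑ i, l i ^ p * q i ≤ ∑ j, m j ^ p * r j := by
  obtain ⟨μ, hμ⟩ := exists_measure_rpow_eq_integral_rpowIntegrand₀₁ hp
  have key {τ : Type} [Fintype τ] (x w : τ → ℝ) (hx : ∀ i, 0 < x i) :
      IntegrableOn (fun t => ∑ i, rpowIntegrand₀₁ p t (x i) * w i) (Set.Ioi 0) μ ∧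
      ∑ i, x i ^ p * w i = ∫ t in Set.Ioi 0, ∑ i, rpowIntegrand₀₁ p t (x i) * w i ∂μ := by
    have hi i : IntegrableOn (fun t => rpowIntegrand₀₁ p t (x i) * w i) (Set.Ioi 0) μ :=
      (hμ (x i) (hx i).le).1.mul_const _
    refine ⟨integrable_finsetSum _ fun i _ => hi i, ?_⟩
    rw [integral_finsetSum _ fun i _ => hi i]
    exact Finset.sum_congr rfl fun i _ => by rw [integral_mul_const, ← (hμ (x i) (hx i).le).2]
  have eval {τ : Type} [Fintype τ] (x w : τ → ℝ) (t : ℝ) :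
      ∑ i, rpowIntegrand₀₁ p t (x i) * w i =
        t ^ p * (t⁻¹ * ∑ i, w i - ∑ i, (t + x i)⁻¹ * w i) := by
    rw [Finset.mul_sum, ← Finset.sum_sub_distrib, Finset.mul_sum]
    exact Finset.sum_congr rfl fun i _ => by rw [rpowIntegrand₀₁]; ring
  rw [(key l q hl).2, (key m r hm).2]
  refine setIntegral_mono_on (key l q hl).1 (key m r hm).1 measurableSet_Ioi fun t h => ?_
  rw [eval, eval, h0]
  exact mul_le_mul_of_nonneg_left (by linarith [ht t h]) (Real.rpow_nonneg (le_of_lt h) _)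

/-- For equal mass and mean, ordered Stieltjes transforms give likewise ordered `p`-th moments when
`1 < p < 2`, since `x ^ p` is a positive superposition of `t⁻¹ x + t (t + x)⁻¹ - 1`. -/
lemma sum_rpow_le_of_one_lt (hl : ∀ i, 0 < l i) (hm : ∀ j, 0 < m j)
    (h0 : ∑ j, r j = ∑ i, q i) (h1 : ∑ j, m j * r j = ∑ i, l i * q i)
    (ht : ∀ t, 0 < t → ∑ j, (t + m j)⁻¹ * r j ≤ ∑ i, (t + l i)⁻¹ * q i)
    {p : ℝ} (hp : p ∈ Set.Ioo (1 : ℝ) 2) :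
    ∑ j, m j ^ p * r j ≤ ∑ i, l i ^ p * q i := by
  obtain ⟨μ, hμ⟩ := exists_measure_rpow_eq_integral_rpowIntegrand₁₂ hp
  have key {τ : Type} [Fintype τ] (x w : τ → ℝ) (hx : ∀ i, 0 < x i) :
      IntegrableOn (fun t => ∑ i, rpowIntegrand₁₂ p t (x i) * w i) (Set.Ioi 0) μ ∧
      ∑ i, x i ^ p * w i = ∫ t in Set.Ioi 0, ∑ i, rpowIntegrand₁₂ p t (x i) * w i ∂μ := by
    have hi i : IntegrableOn (fun t => rpowIntegrand₁₂ p t (x i) * w i) (Set.Ioi 0) μ :=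
      (hμ (x i) (hx i).le).1.mul_const _
    refine ⟨integrable_finsetSum _ fun i _ => hi i, ?_⟩
    rw [integral_finsetSum _ fun i _ => hi i]
    exact Finset.sum_congr rfl fun i _ => by rw [integral_mul_const, ← (hμ (x i) (hx i).le).2]
  have eval {τ : Type} [Fintype τ] (x w : τ → ℝ) (t : ℝ) :
      ∑ i, rpowIntegrand₁₂ p t (x i) * w i =
        t ^ (p - 1) * (t⁻¹ * ∑ i, x i * w i + t * ∑ i, (t + x i)⁻¹ * w i - ∑ i, w i) := by
    rw [Finset.mul_sum, Finset.mul_sum, ← Finset.sum_add_distrib, ← Finset.sum_sub_distrib,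
      Finset.mul_sum]
    exact Finset.sum_congr rfl fun i _ => by rw [rpowIntegrand₁₂]; ring
  rw [(key l q hl).2, (key m r hm).2]
  refine setIntegral_mono_on (key m r hm).1 (key l q hl).1 measurableSet_Ioi fun t h => ?_
  rw [eval, eval, h0, h1]
  have := mul_le_mul_of_nonneg_left (ht t h) (le_of_lt h)
  exact mul_le_mul_of_nonneg_left (by linarith) (Real.rpow_nonneg (le_of_lt h) _)

end scalar

/-- **Data-processing inequality for the geometric Rényi relative entropy under partial
trace.** For positive definite `ρ_AB` (a density matrix) and `σ_AB`, with marginals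
`ρ_A = Tr_B ρ_AB`, `σ_A = Tr_B σ_AB`: `Q̂_α(ρ_AB‖σ_AB) ≥ Q̂_α(ρ_A‖σ_A)` for `α ∈ (1,2]`,
the reverse for `α ∈ (0,1)`, and `D̂_α(ρ_AB‖σ_AB) ≥ D̂_α(ρ_A‖σ_A)` for `α ∈ (0,1) ∪ (1,2]`. -/
theorem geomRenyi_data_processing_ptrace {a b : ℕ}
    (ρAB σAB : Matrix (Fin a × Fin b) (Fin a × Fin b) ℂ)
    (hρ : ρAB.PosDef) (hρ1 : ρAB.trace = 1) (hσ : σAB.PosDef) :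
    (∀ α ∈ Set.Ioc (1 : ℝ) 2,
      (geomQuasiEntropy α (ptraceB ρAB) (ptraceB σAB)).re ≤
        (geomQuasiEntropy α ρAB σAB).re) ∧
    (∀ α ∈ Set.Ioo (0 : ℝ) 1,
      (geomQuasiEntropy α ρAB σAB).re ≤
        (geomQuasiEntropy α (ptraceB ρAB) (ptraceB σAB)).re) ∧
    (∀ α ∈ Set.Ioo (0 : ℝ) 1 ∪ Set.Ioc 1 2,
      (α - 1)⁻¹ * Real.log (geomQuasiEntropy α (ptraceB ρAB) (ptraceB σAB)).re ≤
        (α - 1)⁻¹ * Real.log (geomQuasiEntropy α ρAB σAB).re) := by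
  -- A matrix of trace one is indexed by a nonempty type.
  have hne : Nonempty (Fin a × Fin b) := by
    by_contra h
    rw [not_nonempty_iff] at h
    simp [Matrix.trace] at hρ1
  obtain ⟨i0, k0⟩ := hne
  have : NeZero b := ⟨fun h => (Fin.cast h k0).elim0⟩
  have hρA := ptraceB_posDef hρ
  have hσA := ptraceB_posDef hσ
  obtain ⟨l, q, hl, hq, hQ, h0, h1, h2, ht⟩ := exists_geom_weights hρ hσ
  obtain ⟨m, r, hm, hr, hQ', h0', h1', h2', ht'⟩ := exists_geom_weights hρA hσA
  have H0 : ∑ j, r j = ∑ i, q i := by rw [h0, h0', trace_ptraceB]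
  have H1 : ∑ j, m j * r j = ∑ i, l i * q i := by rw [h1, h1', trace_ptraceB]
  have H2 : ∑ j, m j ^ (2 : ℝ) * r j ≤ ∑ i, l i ^ (2 : ℝ) * q i := by
    rw [h2, h2']
    exact trace_mul_inv_mul_ptraceB_le hρ.1 hσ
  have Ht : ∀ t, 0 < t → ∑ j, (t + m j)⁻¹ * r j ≤ ∑ i, (t + l i)⁻¹ * q i := by
    intro t h
    rw [ht t h, ht' t h, ← ptraceB_smul_add]
    exact trace_mul_inv_mul_ptraceB_le hσ.1 ((hσ.smul (by exact_mod_cast h)).add hρ)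
  have hi : ∀ α ∈ Set.Ioc (1 : ℝ) 2, (geomQuasiEntropy α (ptraceB ρAB) (ptraceB σAB)).re ≤
      (geomQuasiEntropy α ρAB σAB).re := by
    intro α hα
    rw [hQ, hQ']
    rcases hα.2.eq_or_lt with rfl | h
    · exact H2
    · exact sum_rpow_le_of_one_lt hl hm H0 H1 Ht ⟨hα.1, h⟩
  have lo : ∀ α ∈ Set.Ioo (0 : ℝ) 1, (geomQuasiEntropy α ρAB σAB).re ≤
      (geomQuasiEntropy α (ptraceB ρAB) (ptraceB σAB)).re := by
    intro α hα
    rw [hQ, hQ']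
    exact sum_rpow_le_of_lt_one hl hm H0 Ht hα
  refine ⟨hi, lo, ?_⟩
  rintro α (hα | hα)
  · have hpos : 0 < (geomQuasiEntropy α ρAB σAB).re := by
      rw [hQ]
      exact Finset.sum_pos (fun i _ => mul_pos (Real.rpow_pos_of_pos (hl i) _) (hq i))
        ⟨(i0, k0), Finset.mem_univ _⟩
    exact mul_le_mul_of_nonpos_left (Real.log_le_log hpos (lo α hα))
      (inv_nonpos.2 (by linarith [hα.2]))
  · have hpos : 0 < (geomQuasiEntropy α (ptraceB ρAB) (ptraceB σAB)).re := by
      rw [hQ']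
      exact Finset.sum_pos (fun i _ => mul_pos (Real.rpow_pos_of_pos (hm i) _) (hr i))
        ⟨i0, Finset.mem_univ _⟩
    exact mul_le_mul_of_nonneg_left (Real.log_le_log hpos (hi α hα))
      (inv_nonneg.2 (by linarith [hα.1]))
end
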